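/- Let k be a field of characteristic ≠ 2 and (P, ⊥) a poset with an order-reversing involution. Suppose φ is a symplectically indecomposable symplectic representation of (P, ⊥) in a finite-dimensional symplectic space (V, ω) over k whose underlying linear representation is decomposable. Then there exists a finite-dimensional k-vector space W and an indecomposable linear representation ψ of P in W such that φ is isomorphic, as a symplectic representation, to the symplectification ψ⁻ on (W* × W, Ω). -/

import Mathlib

/-- The canonical symplectic form `Ω((ξ, x), (η, y)) = ξ(y) − η(x)` on `W* × W`. -/
noncomputable def OmegaForm (k W : Type*) [Field k] [AddCommGroup W] [Module k W] :
    LinearMap.BilinForm k (Module.Dual k W × W) :=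
  ((Module.dualPairing k W).compl₁₂
      (LinearMap.fst k (Module.Dual k W) W) (LinearMap.snd k (Module.Dual k W) W)) -
  ((Module.dualPairing k W).compl₁₂
      (LinearMap.fst k (Module.Dual k W) W) (LinearMap.snd k (Module.Dual k W) W)).flip

theorem commute_half {A : Type*} [Ring A] {c : A} (hc : 2 * c = 1) (a : A) : Commute c a := by
  have hc' : c * 2 = 1 := by rw [← hc]; exact (Commute.ofNat_right c 2).eq
  calc c * a = c * (a * 2) * c := by rw [mul_assoc, mul_assoc, hc, mul_one]
    _ = c * (2 * a) * c := by rw [(Commute.ofNat_right a 2).eq]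
    _ = a * c := by rw [← mul_assoc, hc', one_mul]

section StarRing

variable {A : Type*} [Ring A] [StarRing A]

theorem star_half {c : A} (hc : 2 * c = 1) : star c = c := by
  have h1 : star c * 2 = 1 := by simpa using congrArg star hc
  calc star c = star c * (2 * c) := by rw [hc, mul_one]
    _ = c := by rw [← mul_assoc, h1, one_mul]

/-- Conjugating by `1 - e⋆e / 2` lowers the nilpotency index of `e⋆e`. -/
theorem exists_idempotent_star_mul_self_eq_zero {c : A} (hc : 2 * c = 1) (n : ℕ) {e : A}
    (he : IsIdempotentElem e) (he0 : e ≠ 0) (hn : (star e * e) ^ 2 ^ n = 0) :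
    ∃ f : A, IsIdempotentElem f ∧ f ≠ 0 ∧ star f * f = 0 := by
  induction n generalizing e with
  | zero => exact ⟨e, he, he0, by simpa using hn⟩
  | succ n ih =>
    have hc1 : c + c = 1 := by rw [← two_mul, hc]
    have hse : star e * star e = star e := by rw [← star_mul, he.eq]
    set x := star e * e with hx
    have hsx : star x = x := by simp [hx]
    have hcc := commute_half hc
    obtain ⟨g, hg⟩ := ((hcc x).isNilpotent_mul_left ⟨_, hn⟩).isUnit_one_sub
    have hsg : star (g : A) = g := by
      rw [hg, star_sub, star_one, star_mul, hsx, star_half hc, (hcc x).eq]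
    have hsgi : star (↑g⁻¹ : A) = ↑g⁻¹ := by
      have : star g = g := Units.ext hsg
      rw [← Units.coe_star, star_inv, this]
    have hgx : Commute (↑g⁻¹ : A) x := by
      refine Commute.units_inv_left ?_
      rw [hg]
      exact (Commute.one_left x).sub_left ((hcc x).mul_left (Commute.refl x))
    have hex : star e * x = x := by rw [hx, ← mul_assoc, hse]
    have hxe : x * e = x := by rw [hx, mul_assoc, he.eq]
    have hgg : star e * (g * g) * e = c * c * (x * x) := by
      have h1 : (g * g : A) = 1 - x + c * c * (x * x) := by
        have h2 : c * x * (c * x) = c * c * (x * x) := (hcc x).symm.mul_mul_mul_comm c x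
        have h3 : c * x + c * x = x := by rw [← add_mul, hc1, one_mul]
        rw [hg, mul_sub, mul_one, sub_mul, one_mul, h2]
        rw [show 1 - x = 1 - (c * x + c * x) by rw [h3]]
        abel
      have h4 : star e * (c * c * (x * x)) * e = c * c * (x * x) := by
        rw [← mul_assoc (star e), ← (((hcc _).mul_left (hcc (star e)))).eq, mul_assoc, mul_assoc,
          mul_assoc x, hxe, ← mul_assoc (star e), hex]
      rw [h1, mul_add, add_mul, h4, mul_sub, sub_mul, mul_one, hex, hxe, ← hx, sub_self, zero_add]
    have hss : star (g * e * ↑g⁻¹) * (g * e * ↑g⁻¹) = ↑g⁻¹ * (c * c * (x * x)) * ↑g⁻¹ := by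
      rw [← hgg, star_mul, star_mul, hsg, hsgi]
      simp only [mul_assoc]
    refine ih (e := g * e * ↑g⁻¹) ?_ ?_ ?_
    · change g * e * ↑g⁻¹ * (g * e * ↑g⁻¹) = g * e * ↑g⁻¹
      rw [mul_assoc (g * e : A), ← mul_assoc _ (g * e : A), Units.inv_mul_cancel_left,
        ← mul_assoc, mul_assoc (g : A), he.eq]
    · intro h
      apply he0
      simpa using h
    · have hgxx : Commute (↑g⁻¹ : A) (x * x) := hgx.mul_right hgx
      have hccx (a : A) : Commute (c * c) a := (hcc a).mul_left (hcc a)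
      rw [hss, Commute.mul_pow, Commute.mul_pow, Commute.mul_pow, ← pow_two x, ← pow_mul,
        ← pow_succ', hn, mul_zero, mul_zero, zero_mul]
      · exact hccx _
      · exact ((hccx _).symm).mul_right hgxx
      · exact (Commute.refl _).mul_left (((hccx _).mul_left hgxx.symm))

theorem eq_zero_or_eq_one_of_idempotent_of_isSelfAdjoint
    (h : ∀ x : A, IsSelfAdjoint x → IsNilpotent x ∨ IsLeftRegular x) {e : A}
    (he : IsIdempotentElem e) (hs : IsSelfAdjoint e) : e = 0 ∨ e = 1 := by
  rcases h e hs with hn | hr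
  · left
    obtain ⟨n, hn⟩ := hn
    rw [← he.pow_succ_eq n, pow_succ, hn, zero_mul]
  · right
    exact hr (by simpa using he.eq)

theorem add_star_eq_one_of_idempotent
    (h : ∀ x : A, IsSelfAdjoint x → IsNilpotent x ∨ IsLeftRegular x) {e : A}
    (he : IsIdempotentElem e) (he0 : e ≠ 0) (h1 : star e * e = 0) (h2 : e * star e = 0) :
    e + star e = 1 := by
  have hse : star e * star e = star e := by rw [← star_mul, he.eq]
  have hid : IsIdempotentElem (e + star e) := by
    rw [IsIdempotentElem, mul_add, add_mul, add_mul, he.eq, hse, h1, h2, add_zero, zero_add]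
  refine (eq_zero_or_eq_one_of_idempotent_of_isSelfAdjoint h hid
    (IsSelfAdjoint.add_star_self e)).resolve_left fun h0 => he0 ?_
  rw [← he.eq, ← add_zero (e * e), ← h2, ← mul_add, h0, mul_zero, h2]

/-- A star ring in which `2` is invertible and every selfadjoint element is nilpotent or regular has
an idempotent `e` with `e⋆ = 1 - e` as soon as it has a nontrivial idempotent. -/
theorem exists_idempotent_star_eq_one_sub {c : A} (hc : 2 * c = 1)
    (h : ∀ x : A, IsSelfAdjoint x → IsNilpotent x ∨ IsLeftRegular x) {e : A}
    (he : IsIdempotentElem e) (he0 : e ≠ 0) (he1 : e ≠ 1) :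
    ∃ f : A, IsIdempotentElem f ∧ f ≠ 0 ∧ star f = 1 - f := by
  obtain ⟨n, hn⟩ : IsNilpotent (star e * e) := by
    refine (h _ (IsSelfAdjoint.star_mul_self e)).resolve_right fun hr => he1 (hr ?_)
    simp only [mul_one]
    rw [mul_assoc, he.eq]
  obtain ⟨f, hf, hf0, hff⟩ := exists_idempotent_star_mul_self_eq_zero hc n he he0
    (pow_eq_zero_of_le Nat.lt_two_pow_self.le hn)
  have hcc := commute_half hc
  have hc1 : c + c = 1 := by rw [← two_mul, hc]
  have hsf : star f * star f = star f := by rw [← star_mul, hf.eq]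
  set y := f * star f with hy
  have hyf : y * f = 0 := by rw [hy, mul_assoc, hff, mul_zero]
  have hfy : f * y = y := by rw [hy, ← mul_assoc, hf.eq]
  have hsy : star y = y := by simp [hy]
  have hyy : y * y = 0 := by rw [hy, ← mul_assoc, ← hy, hyf, zero_mul]
  have hcy : c * y * (c * y) = 0 := by
    rw [(hcc y).symm.mul_mul_mul_comm c y, hyy, mul_zero]
  have hcys : star (c * y) = c * y := by rw [star_mul, hsy, star_half hc, (hcc y).eq]
  have hcyc : c * y + c * y = y := by rw [← add_mul, hc1, one_mul]
  have hfcy : f * (c * y) = c * y := by rw [← mul_assoc, ← (hcc f).eq, mul_assoc, hfy]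
  have hcyf : c * y * f = 0 := by rw [mul_assoc, hyf, mul_zero]
  have hsfcy : star f * (c * y) = 0 := by
    rw [← mul_assoc, ← (hcc _).eq, hy, mul_assoc, ← mul_assoc (star f), hff, zero_mul, mul_zero]
  have hcysf : c * y * star f = c * y := by rw [hy, mul_assoc, mul_assoc, hsf]
  have hidem : IsIdempotentElem (f - c * y) := by
    rw [IsIdempotentElem, mul_sub, sub_mul, sub_mul, hf.eq, hfcy, hcyf, hcy, sub_zero, sub_zero]
  have hne : f - c * y ≠ 0 := fun h0 => hf0 (by
    rw [← hf.eq, ← sub_zero (f * f), ← hcyf, ← sub_mul, h0, zero_mul, hcyf])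
  refine ⟨f - c * y, hidem, hne, ?_⟩
  rw [eq_sub_iff_add_eq, add_comm]
  refine add_star_eq_one_of_idempotent h hidem hne ?_ ?_
  · rw [star_sub, hcys, mul_sub, sub_mul, sub_mul, hff, hcyf, hsfcy, hcy]
    simp
  · rw [star_sub, hcys, mul_sub, sub_mul, sub_mul, hcysf, hfcy, hcy, ← hy, sub_zero, sub_sub, hcyc,
      sub_self]

end StarRing

section Representation

variable {k V P : Type*} [Field k] [AddCommGroup V] [Module k V]

/-- The endomorphism algebra of the linear representation `φ`. -/
def repEnd (φ : P → Submodule k V) : Subalgebra k (Module.End k V) where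
  carrier := {f | ∀ p, ∀ v ∈ φ p, f v ∈ φ p}
  mul_mem' hf hg p v hv := hf p _ (hg p v hv)
  add_mem' hf hg p v hv := add_mem (hf p v hv) (hg p v hv)
  algebraMap_mem' r p v hv := by simpa using (φ p).smul_mem r hv

theorem eq_inf_range_sup_inf_ker [FiniteDimensional k V] {g : Module.End k V}
    (hg : Disjoint (LinearMap.ker g) (LinearMap.range g)) {N : Submodule k V}
    (hN : ∀ v ∈ N, g v ∈ N) :
    N = (N ⊓ LinearMap.range g) ⊔ (N ⊓ LinearMap.ker g) := by
  refine le_antisymm (fun x hx => ?_) (sup_le inf_le_left inf_le_left)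
  have hmaps : ∀ v ∈ N ⊓ LinearMap.range g, g v ∈ N ⊓ LinearMap.range g :=
    fun v hv => ⟨hN v hv.1, ⟨v, rfl⟩⟩
  have hinj : Function.Injective (g.restrict hmaps) := by
    rw [← LinearMap.ker_eq_bot, LinearMap.ker_eq_bot']
    intro v hv
    exact Subtype.ext ((Submodule.disjoint_def.mp hg) v (congrArg Subtype.val hv) v.2.2)
  obtain ⟨z, hz⟩ := LinearMap.injective_iff_surjective.mp hinj ⟨g x, hN x hx, x, rfl⟩
  have hz' : g z = g x := congrArg Subtype.val hz
  rw [← add_sub_cancel (z : V) x]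
  exact Submodule.add_mem_sup z.2 ⟨sub_mem hx z.2.1, by simp [hz']⟩

theorem projection_mem_of_eq_sup {U' U'' : Submodule k V} (h : IsCompl U' U'')
    {N : Submodule k V} (hN : N = (N ⊓ U') ⊔ (N ⊓ U'')) {v : V} (hv : v ∈ N) :
    U'.projection U'' h v ∈ N := by
  rw [hN] at hv
  obtain ⟨a, ha, b, hb, rfl⟩ := Submodule.mem_sup.mp hv
  rw [map_add, Submodule.projection_apply_of_mem_left h ha.2,
    Submodule.projection_apply_of_mem_right h hb.2, add_zero]
  exact ha.1

theorem projection_eq_zero_iff {U' U'' : Submodule k V} (h : IsCompl U' U'') :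
    U'.projection U'' h = 0 ↔ U' = ⊥ := by
  rw [← LinearMap.range_eq_bot, Submodule.range_projection]

theorem eq_bot_of_projection_eq_one {U' U'' : Submodule k V} (h : IsCompl U' U'')
    (h1 : U'.projection U'' h = 1) : U'' = ⊥ := by
  rw [← Submodule.ker_projection h, h1]
  exact LinearMap.ker_id

variable [FiniteDimensional k V]

theorem apply_leftAdjoint {ω : LinearMap.BilinForm k V}
    (hnd : LinearMap.BilinForm.Nondegenerate ω) (f : Module.End k V) (v w : V) :
    ω (ω.leftAdjointOfNondegenerate hnd f v) w = ω v (f w) :=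
  ω.isAdjointPairLeftAdjointOfNondegenerate hnd f v w

theorem leftAdjoint_eq {ω : LinearMap.BilinForm k V}
    (hnd : LinearMap.BilinForm.Nondegenerate ω) {f g : Module.End k V}
    (h : ∀ v w, ω (g v) w = ω v (f w)) : ω.leftAdjointOfNondegenerate hnd f = g :=
  ((ω.isAdjointPair_iff_eq_of_nondegenerate hnd g f).mp h).symm

/-- Taking adjoints with respect to an alternating form, as an involution of `repEnd φ`. -/
@[reducible]
noncomputable def repEndStarRing {invol : P → P} (hinv : Function.Involutive invol)
    {ω : LinearMap.BilinForm k V} (halt : LinearMap.IsAlt ω)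
    (hnd : LinearMap.BilinForm.Nondegenerate ω) {φ : P → Submodule k V}
    (hsymp : ∀ p, φ (invol p) = LinearMap.BilinForm.orthogonal ω.flip (φ p)) :
    StarRing (repEnd φ) where
  star f := ⟨ω.leftAdjointOfNondegenerate hnd f, by
    intro p v hv
    rw [← hinv p, hsymp, LinearMap.BilinForm.mem_orthogonal_iff] at hv ⊢
    intro n hn
    exact (apply_leftAdjoint hnd f v n).trans (hv _ (f.2 _ _ hn))⟩
  star_involutive f := Subtype.ext <| leftAdjoint_eq hnd fun v w => by
    rw [← halt.neg w, ← halt.neg _ v]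
    exact congrArg _ (apply_leftAdjoint hnd (f : Module.End k V) w v).symm
  star_mul f g := Subtype.ext <| leftAdjoint_eq hnd fun v w => by
    simp only [Module.End.mul_apply, apply_leftAdjoint, MulMemClass.coe_mul]
  star_add f g := Subtype.ext <| leftAdjoint_eq hnd fun v w => by
    simp only [LinearMap.add_apply, map_add, apply_leftAdjoint,
      AddMemClass.coe_add]

theorem isNilpotent_or_injective_of_selfAdjoint
    {ω : LinearMap.BilinForm k V} (hnd : LinearMap.BilinForm.Nondegenerate ω)
    {φ : P → Submodule k V}
    (hsympindec : ∀ U' U'' : Submodule k V,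
      U'' = LinearMap.BilinForm.orthogonal ω.flip U' → IsCompl U' U'' →
      (∀ p, φ p = (φ p ⊓ U') ⊔ (φ p ⊓ U'')) → U' = ⊥ ∨ U'' = ⊥)
    {f : Module.End k V} (hf : f ∈ repEnd φ) (hadj : ∀ v w, ω (f v) w = ω v (f w)) :
    IsNilpotent f ∨ Function.Injective f := by
  obtain ⟨n, hn, hn0⟩ := (f.eventually_isCompl_ker_pow_range_pow.and
    (Filter.eventually_ge_atTop 1)).exists
  have hadjn : ∀ v w, ω ((f ^ n) v) w = ω v ((f ^ n) w) := by
    clear hn hn0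
    induction n with
    | zero => simp
    | succ n ih =>
      intro v w
      rw [pow_succ, Module.End.mul_apply, ih, hadj, ← Module.End.mul_apply, ← pow_succ']
      rfl
  have horth : LinearMap.ker (f ^ n) =
      LinearMap.BilinForm.orthogonal ω.flip (LinearMap.range (f ^ n)) := by
    ext v
    rw [LinearMap.mem_ker, LinearMap.BilinForm.mem_orthogonal_iff]
    constructor
    · rintro hv _ ⟨t, rfl⟩
      change ω v ((f ^ n) t) = 0
      rw [← hadjn, hv, map_zero, LinearMap.zero_apply]
    · intro hv
      refine hnd.1 _ fun t => ?_
      rw [hadjn]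
      exact hv _ ⟨t, rfl⟩
  rcases hsympindec _ _ horth hn.symm
    (fun p => eq_inf_range_sup_inf_ker hn.disjoint (pow_mem hf n p)) with h | h
  · exact Or.inl ⟨n, LinearMap.range_eq_bot.mp h⟩
  · refine Or.inr fun x y hxy => LinearMap.ker_eq_bot.mp h ?_
    obtain ⟨m, rfl⟩ := Nat.exists_eq_add_of_le' hn0
    rw [pow_succ, Module.End.mul_apply, hxy]
    rfl

theorem exists_splitting_of_idempotent {e : Module.End k V} (he : IsIdempotentElem e) :
    ∃ (n : ℕ) (i : (Fin n → k) →ₗ[k] V) (r : V →ₗ[k] Fin n → k),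
      r ∘ₗ i = LinearMap.id ∧ i ∘ₗ r = e := by
  let b := (Module.finBasis k (LinearMap.range e)).equivFun
  refine ⟨_, (LinearMap.range e).subtype ∘ₗ b.symm.toLinearMap,
    b.toLinearMap ∘ₗ e.rangeRestrict, ?_, ?_⟩
  · refine LinearMap.ext fun x => b.symm.injective (Subtype.ext ?_)
    obtain ⟨t, ht⟩ := (b.symm x).2
    simp [← ht, ← Module.End.mul_apply, he.eq]
  · ext x
    simp

end Representation

/-- (Quebbemann–Scharlau–Schulte / Sergeichuk.)  Let `φ` be a
symplectically indecomposable symplectic representation of a poset with order-reversing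
involution `(P, ⊥)` in `(V, ω)` over a field of characteristic `≠ 2`, whose underlying
linear representation is decomposable.  Then there are a finite-dimensional space
`W = Fin n → k` and an indecomposable linear representation `ψ` of `P` in `W` such that
`φ` is isomorphic, as a symplectic representation, to the symplectification `ψ⁻` on
`(W* × W, Ω)`. -/
theorem indecomposable_split_symplectic_rep_is_symplectification
    {k V P : Type*} [Field k] [AddCommGroup V] [Module k V] [FiniteDimensional k V]
    [PartialOrder P] (h2 : (2 : k) ≠ 0)
    (invol : P → P) (hinv : Function.Involutive invol) (hanti : Antitone invol)
    (ω : LinearMap.BilinForm k V) (halt : LinearMap.IsAlt ω)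
    (hnd : LinearMap.BilinForm.Nondegenerate ω)
    (φ : P → Submodule k V) (hmono : Monotone φ)
    (hsymp : ∀ p, φ (invol p) = LinearMap.BilinForm.orthogonal ω.flip (φ p))
    (hsympindec : ∀ U' U'' : Submodule k V,
      U'' = LinearMap.BilinForm.orthogonal ω.flip U' → IsCompl U' U'' →
      (∀ p, φ p = (φ p ⊓ U') ⊔ (φ p ⊓ U'')) → U' = ⊥ ∨ U'' = ⊥)
    (hlindec : ∃ U' U'' : Submodule k V, U' ≠ ⊥ ∧ U'' ≠ ⊥ ∧ IsCompl U' U'' ∧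
      ∀ p, φ p = (φ p ⊓ U') ⊔ (φ p ⊓ U'')) :
    ∃ (n : ℕ) (ψ : P → Submodule k (Fin n → k)),
      0 < n ∧ Monotone ψ ∧
      (∀ U' U'' : Submodule k (Fin n → k), IsCompl U' U'' →
        (∀ p, ψ p = (ψ p ⊓ U') ⊔ (ψ p ⊓ U'')) → U' = ⊥ ∨ U'' = ⊥) ∧
      ∃ F : V ≃ₗ[k] (Module.Dual k (Fin n → k) × (Fin n → k)),
        (∀ a b : V, OmegaForm k (Fin n → k) (F a) (F b) = ω a b) ∧
        ∀ p, (φ p).map (F : V →ₗ[k] (Module.Dual k (Fin n → k) × (Fin n → k))) =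
          (ψ (invol p)).dualAnnihilator.prod (ψ p) := by
  let _ : StarRing (repEnd φ) := repEndStarRing hinv halt hnd hsymp
  have hstar (f : repEnd φ) (v w : V) :
      ω (((star f : repEnd φ) : Module.End k V) v) w = ω v ((f : Module.End k V) w) :=
    apply_leftAdjoint hnd _ v w
  have hself (f : repEnd φ) (hf : IsSelfAdjoint f) : IsNilpotent f ∨ IsLeftRegular f := by
    rcases isNilpotent_or_injective_of_selfAdjoint hnd hsympindec f.2
      (fun v w => by rw [← hstar, hf.star_eq]) with ⟨n, hn⟩ | hinj
    · exact Or.inl ⟨n, Subtype.ext hn⟩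
    · refine Or.inr fun a b hab => Subtype.ext (LinearMap.ext fun v => hinj ?_)
      exact congrArg (fun g : repEnd φ => (g : Module.End k V) v) hab
  obtain ⟨U', U'', hU', hU'', hU, hφU⟩ := hlindec
  have hc : (2 : repEnd φ) * algebraMap k _ 2⁻¹ = 1 := by
    rw [← map_ofNat (algebraMap k (repEnd φ)) 2, ← map_mul, mul_inv_cancel₀ h2, map_one]
  obtain ⟨d, hd, hd0, hds⟩ := exists_idempotent_star_eq_one_sub hc hself
    (e := ⟨U'.projection U'' hU, fun p v hv => projection_mem_of_eq_sup hU (hφU p) hv⟩)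
    (Subtype.ext (Submodule.isIdempotentElem_projection hU))
    (fun h => hU' ((projection_eq_zero_iff hU).mp (congrArg Subtype.val h)))
    (fun h => hU'' (eq_bot_of_projection_eq_one hU (congrArg Subtype.val h)))
  obtain ⟨n, i, r, hri, hir⟩ := exists_splitting_of_idempotent (congrArg Subtype.val hd.eq)
  have hri' (x) : r (i x) = x := LinearMap.congr_fun hri x
  have hir' (v) : i (r v) = (d : Module.End k V) v := LinearMap.congr_fun hir v
  have hωd (v w : V) : ω ((d : Module.End k V) v) w = ω v w - ω v ((d : Module.End k V) w) := by
    have h := hstar d w v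
    rw [hds] at h
    have h' : ω w v - ω ((d : Module.End k V) w) v = ω w ((d : Module.End k V) v) := by
      simpa using h
    rw [← halt.neg w, ← h', ← halt.neg v w, ← halt.neg v]
    ring
  have hmem (p : P) (v : V) : v ∈ φ p ↔ ∀ w ∈ φ (invol p), ω v w = 0 := by
    conv_lhs => rw [← hinv p, hsymp, LinearMap.BilinForm.mem_orthogonal_iff]
    rfl
  refine ⟨n, fun p => (φ p).comap i, ?_, fun p q hpq => Submodule.comap_mono (hmono hpq), ?_, ?_⟩
  · refine Nat.pos_of_ne_zero ?_
    rintro rfl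
    refine hd0 (Subtype.ext (LinearMap.ext fun v => ?_))
    rw [← hir', Subsingleton.elim (r v) 0, map_zero]
    rfl
  · intro W' W'' hW hψ
    set q := W'.projection W'' hW with hq
    let f : repEnd φ := ⟨i ∘ₗ q ∘ₗ r, fun p v hv => by
      have hrv : r v ∈ (φ p).comap i := by
        rw [Submodule.mem_comap, hir']
        exact d.2 p v hv
      exact projection_mem_of_eq_sup hW (hψ p) hrv⟩
    have hfapp (v : V) : (f : Module.End k V) v = i (q (r v)) := rfl
    have hff : IsIdempotentElem f := Subtype.ext <| LinearMap.ext fun v => by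
      have hqq : q (q (r v)) = q (r v) :=
        LinearMap.congr_fun (Submodule.isIdempotentElem_projection hW).eq (r v)
      simp only [MulMemClass.coe_mul, Module.End.mul_apply, hfapp, hri', hqq]
    have hdf : d * f = f := Subtype.ext <| LinearMap.ext fun v => by
      simp only [MulMemClass.coe_mul, Module.End.mul_apply, hfapp, ← hir', hri']
    have hfd : f * d = f := Subtype.ext <| LinearMap.ext fun v => by
      simp only [MulMemClass.coe_mul, Module.End.mul_apply, hfapp, ← hir', hri']
    have hsfd : star f = star f * star d := by rw [← star_mul, hdf]
    have hsdf : star f = star d * star f := by rw [← star_mul, hfd]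
    have hdsf : d * star f = 0 := by
      rw [hsdf, hds, ← mul_assoc, mul_sub, mul_one, hd.eq, sub_self, zero_mul]
    have h1 : star f * f = 0 := by
      rw [hsfd, ← hdf, hds, mul_assoc, ← mul_assoc (1 - d), sub_mul, one_mul, hd.eq, sub_self,
        zero_mul, mul_zero]
    have h2' : f * star f = 0 := by
      rw [← hfd, mul_assoc, hfd, hdsf, mul_zero]
    have hqf (x) : q x = r ((f : Module.End k V) (i x)) := by rw [hfapp, hri', hri']
    by_cases hf0 : f = 0
    · left
      refine (projection_eq_zero_iff hW).mp (LinearMap.ext fun x => ?_)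
      rw [← hq, hqf, hf0]
      exact map_zero r
    · right
      have hfd' : f = d := by
        rw [← mul_one d, ← add_star_eq_one_of_idempotent hself hff hf0 h1 h2', mul_add, hdf, hdsf,
          add_zero]
      refine eq_bot_of_projection_eq_one hW (LinearMap.ext fun x => ?_)
      rw [← hq, hqf, hfd', ← hir', hri', hri']
      rfl
  · let F : V →ₗ[k] Module.Dual k (Fin n → k) × (Fin n → k) := (ω.compl₂ i).prod r
    have hF1 (v : V) (x) : (F v).1 x = ω v (i x) := rfl
    have hF2 (v : V) : (F v).2 = r v := rfl
    have hΩ (a b : V) : OmegaForm k (Fin n → k) (F a) (F b) = ω a b := by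
      change (F a).1 (F b).2 - (F b).1 (F a).2 = ω a b
      rw [hF1, hF1, hF2, hF2, hir', hir', ← halt.neg ((d : Module.End k V) a) b, hωd]
      ring
    have hdi (x) : (d : Module.End k V) (i x) = i x := by rw [← hir', hri']
    have hωi (x) (z) : ω (i x) (i z) = 0 := by
      rw [← hdi x, hωd, hdi, sub_self]
    have hinj : Function.Injective F := by
      rw [← LinearMap.ker_eq_bot, LinearMap.ker_eq_bot']
      refine fun v hv => hnd.1 v fun w => ?_
      rw [← hΩ, hv, map_zero, LinearMap.zero_apply]
    have hsurj : Function.Surjective F := by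
      rintro ⟨ξ, x⟩
      let u := (ω.toDual hnd).symm (ξ ∘ₗ r)
      have hu (v : V) : ω u v = ξ (r v) :=
        LinearMap.BilinForm.apply_toDual_symm_apply (ξ ∘ₗ r) v
      refine ⟨u - (d : Module.End k V) u + i x, Prod.ext (LinearMap.ext fun z => ?_) ?_⟩
      · rw [hF1]
        simp only [map_add, map_sub, LinearMap.add_apply, LinearMap.sub_apply, hωd, hdi, hωi, hu,
          hri', sub_self, sub_zero, add_zero]
      · rw [hF2, map_add, map_sub, ← hir', hri', hri', sub_self, zero_add]
    refine ⟨LinearEquiv.ofBijective F ⟨hinj, hsurj⟩, hΩ, fun p => ?_⟩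
    have hFmem (v : V) : F v ∈ ((φ (invol p)).comap i).dualAnnihilator.prod ((φ p).comap i) ↔
        v ∈ φ p := by
      rw [Submodule.mem_prod, Submodule.mem_dualAnnihilator, Submodule.mem_comap, hF2, hir']
      constructor
      · rintro ⟨h1, h3⟩
        rw [hmem]
        intro w hw
        have hdw : ω v ((d : Module.End k V) w) = 0 := by
          rw [← hir', ← hF1]
          refine h1 _ ?_
          rw [Submodule.mem_comap, hir']
          exact d.2 _ w hw
        have hdv := (hmem p _).mp h3 w hw
        rwa [hωd, hdw, sub_zero] at hdv
      · exact fun hv => ⟨fun x hx => (hmem p v).mp hv _ hx, d.2 p v hv⟩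
    ext y
    obtain ⟨v, rfl⟩ := hsurj y
    rw [hFmem, Submodule.mem_map]
    exact ⟨fun ⟨w, hw, hwv⟩ => hinj hwv ▸ hw, fun hv => ⟨v, hv, rfl⟩⟩
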